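/- arXiv:1503.06651 — 4 statements merged into one kernel-verified Lean document; each statement's English description precedes it below -/
import Mathlib

section
/- Let P_5(X) = 15X⁴ − 0.02X⁵ − 4.6X⁶ − 0.1X⁷ − 2X + 4 and Q_5(X) = 15X³ − 0.02X⁴ − 4.6X⁵ − 0.1X⁶ − 2. Then P_5(X) > 0 for all X ∈ (0, 1], so every positive real root of P_5 is greater than 1, while Q_5 has a positive real root smaller than 0.53. Consequently the smallest positive root of Q_5 is strictly smaller than every positive real root of P_5. -/
/-- `P₅(X) = 15X⁴ − 0.02X⁵ − 4.6X⁶ − 0.1X⁷ − 2X + 4`. -/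
noncomputable def P5 : ℝ → ℝ :=
  fun X => 15 * X ^ 4 - 0.02 * X ^ 5 - 4.6 * X ^ 6 - 0.1 * X ^ 7 - 2 * X + 4

/-- `Q₅(X) = 15X³ − 0.02X⁴ − 4.6X⁵ − 0.1X⁶ − 2`. -/
noncomputable def Q5 : ℝ → ℝ :=
  fun X => 15 * X ^ 3 - 0.02 * X ^ 4 - 4.6 * X ^ 5 - 0.1 * X ^ 6 - 2

/-!
The two polynomials are linked by `P₅(X) = X Q₅(X) + 4`. On `[0, 1]` the term `15X³` of `Q₅`
dominates its three negative terms of higher degree, so `Q₅ ≥ -2` there and `P₅(X) ≥ 4 - 2X > 0`.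
On the other hand `Q₅` changes sign between `0` and `0.53`, so its least positive root lies below
`0.53`.
-/

open Set

section LeastSolution

variable {α β : Type*} [ConditionallyCompleteLinearOrder α] [TopologicalSpace α] [OrderTopology α]
  [TopologicalSpace β] {f : α → β} {a : α} {c : β}

lemma exists_isLeast_gt_and_eq [T1Space β] (hf : ContinuousOn f (Ici a)) (ha : f a ≠ c)
    (hne : ∃ x, a < x ∧ f x = c) : ∃ m, IsLeast {x | a < x ∧ f x = c} m := by
  -- Since `f a ≠ c`, admitting `x = a` adds no solution but makes the solution set closed.
  have hset : {x | a < x ∧ f x = c} = Ici a ∩ f ⁻¹' {c} := by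
    ext x
    refine and_congr_left fun hx => ⟨le_of_lt, fun hax => hax.lt_of_ne ?_⟩
    rintro rfl
    exact ha hx
  have hclosed : IsClosed {x | a < x ∧ f x = c} :=
    hset ▸ hf.preimage_isClosed_of_isClosed isClosed_Ici isClosed_singleton
  exact ⟨_, hclosed.isLeast_csInf hne ⟨a, fun _ hx => hx.1.le⟩⟩

lemma exists_isLeast_gt_and_eq_of_lt_of_lt [DenselyOrdered α] [LinearOrder β]
    [OrderClosedTopology β] {b : α} (hab : a ≤ b) (hf : ContinuousOn f (Ici a))
    (ha : f a < c) (hb : c < f b) : ∃ m < b, IsLeast {x | a < x ∧ f x = c} m := by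
  obtain ⟨x, ⟨hax, hxb⟩, hx⟩ := intermediate_value_Ioo hab (hf.mono Icc_subset_Ici_self) ⟨ha, hb⟩
  obtain ⟨m, hm⟩ := exists_isLeast_gt_and_eq hf ha.ne ⟨x, hax, hx⟩
  exact ⟨m, (hm.2 ⟨hax, hx⟩).trans_lt hxb, hm⟩

end LeastSolution

lemma P5_eq_mul_Q5_add_four (X : ℝ) : P5 X = X * Q5 X + 4 := by
  unfold P5 Q5
  ring

lemma continuous_Q5 : Continuous Q5 := by
  unfold Q5
  fun_prop

lemma neg_two_le_Q5 {X : ℝ} (hX : X ∈ Icc 0 1) : -2 ≤ Q5 X := by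
  have pow_le_cube {n : ℕ} (hn : 3 ≤ n) : X ^ n ≤ X ^ 3 := pow_le_pow_of_le_one hX.1 hX.2 hn
  have h3 : 0 ≤ X ^ 3 := pow_nonneg hX.1 3
  have h4 : X ^ 4 ≤ X ^ 3 := pow_le_cube (by norm_num)
  have h5 : X ^ 5 ≤ X ^ 3 := pow_le_cube (by norm_num)
  have h6 : X ^ 6 ≤ X ^ 3 := pow_le_cube (by norm_num)
  unfold Q5
  linarith

lemma P5_pos_of_mem_Icc {X : ℝ} (hX : X ∈ Icc 0 1) : 0 < P5 X :=
  calc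
    0 < X * (-2) + 4 := by linarith [hX.2]
    _ ≤ X * Q5 X + 4 := by gcongr; exacts [hX.1, neg_two_le_Q5 hX]
    _ = P5 X := (P5_eq_mul_Q5_add_four X).symm

lemma one_lt_of_P5_eq_zero {X : ℝ} (hX : 0 ≤ X) (hroot : P5 X = 0) : 1 < X :=
  lt_of_not_ge fun hX1 => (P5_pos_of_mem_Icc ⟨hX, hX1⟩).ne' hroot

lemma exists_isLeast_pos_root_Q5_lt : ∃ m < 0.53, IsLeast {X : ℝ | 0 < X ∧ Q5 X = 0} m := by
  have hQ_zero : Q5 0 < 0 := by norm_num [Q5]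
  have hQ_right : 0 < Q5 0.53 := by norm_num [Q5]
  exact exists_isLeast_gt_and_eq_of_lt_of_lt (by norm_num) continuous_Q5.continuousOn
    hQ_zero hQ_right

/-- `P₅ > 0` on `(0, 1]`, so every positive root of `P₅` exceeds `1`; `Q₅` has a
positive root smaller than `0.53`; consequently the smallest positive root of `Q₅`
is strictly smaller than every positive real root of `P₅`. -/
theorem Q5_smallest_root_lt_P5_roots :
    (∀ X ∈ Set.Ioc (0 : ℝ) 1, 0 < P5 X) ∧
    (∀ X : ℝ, 0 < X → P5 X = 0 → 1 < X) ∧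
    (∃ X : ℝ, 0 < X ∧ X < 0.53 ∧ Q5 X = 0) ∧
    (∃ m : ℝ, IsLeast {X : ℝ | 0 < X ∧ Q5 X = 0} m ∧
      ∀ Y : ℝ, 0 < Y → P5 Y = 0 → m < Y) := by
  obtain ⟨m, hm_lt, hm⟩ := exists_isLeast_pos_root_Q5_lt
  refine ⟨fun X hX => P5_pos_of_mem_Icc (Ioc_subset_Icc_self hX),
    fun X hX hroot => one_lt_of_P5_eq_zero hX.le hroot,
    ⟨m, hm.1.1, hm_lt, hm.1.2⟩, m, hm, fun Y hY hroot => ?_⟩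
  calc
    m < 0.53 := hm_lt
    _ < 1 := by norm_num
    _ < Y := one_lt_of_P5_eq_zero hY.le hroot
end

section
/- Let P_6(X) = 25X⁶ − 0.03X⁷ − 6.9X⁸ − 0.15X⁹ − 3X + 6 and Q_6(X) = 25X⁵ − 0.03X⁶ − 6.9X⁷ − 0.15X⁸ − 3. Then P_6(X) > 0 for all X ∈ (0, 1], so every positive real root of P_6 is greater than 1, while Q_6 has a positive real root smaller than 0.68. Consequently the smallest positive root of Q_6 is strictly smaller than every positive real root of P_6. -/
/-- `P₆(X) = 25X⁶ − 0.03X⁷ − 6.9X⁸ − 0.15X⁹ − 3X + 6`. -/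
noncomputable def P6 : ℝ → ℝ :=
  fun X => 25 * X ^ 6 - 0.03 * X ^ 7 - 6.9 * X ^ 8 - 0.15 * X ^ 9 - 3 * X + 6

/-- `Q₆(X) = 25X⁵ − 0.03X⁶ − 6.9X⁷ − 0.15X⁸ − 3`. -/
noncomputable def Q6 : ℝ → ℝ :=
  fun X => 25 * X ^ 5 - 0.03 * X ^ 6 - 6.9 * X ^ 7 - 0.15 * X ^ 8 - 3

/-!
The two polynomials are tied by `P₆(X) = X Q₆(X) + 6`, and on `[0, 1]` the term `25X⁵` dominates
the other powers of `X` in `Q₆`, so that `Q₆ ≥ -3` and `P₆ ≥ 6 - 3X > 0` there. On the other hand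
`Q₆` is negative at `0` and positive at `0.68`, so its smallest positive root comes before `0.68`.
-/

open Set

theorem exists_mem_Ioo_isLeast_fiber {α β : Type*} [ConditionallyCompleteLinearOrder α]
    [DenselyOrdered α] [TopologicalSpace α] [OrderTopology α] [LinearOrder β] [TopologicalSpace β]
    [OrderClosedTopology β] {f : α → β} {a b : α} {c : β} (hab : a ≤ b)
    (hf : ContinuousOn f (Icc a b)) (ha : f a < c) (hb : c < f b) :
    ∃ m ∈ Ioo a b, IsLeast {x | a < x ∧ f x = c} m := by
  have compact_fiber : IsCompact (Icc a b ∩ f ⁻¹' {c}) :=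
    isCompact_Icc.of_isClosed_subset
      (hf.preimage_isClosed_of_isClosed isClosed_Icc isClosed_singleton) inter_subset_left
  have nonempty_fiber : (Icc a b ∩ f ⁻¹' {c}).Nonempty :=
    intermediate_value_Icc hab hf ⟨ha.le, hb.le⟩
  obtain ⟨m, ⟨⟨ham, hmb⟩, hm : f m = c⟩, m_le⟩ := compact_fiber.exists_isLeast nonempty_fiber
  have a_lt_m : a < m := ham.lt_of_ne (by rintro rfl; exact ha.ne hm)
  have m_lt_b : m < b := hmb.lt_of_ne (by rintro rfl; exact hb.ne' hm)
  refine ⟨m, ⟨a_lt_m, m_lt_b⟩, ⟨a_lt_m, hm⟩, ?_⟩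
  rintro x ⟨hax, hx⟩
  rcases le_total x b with hxb | hbx
  · exact m_le ⟨⟨hax.le, hxb⟩, hx⟩
  · exact hmb.trans hbx

theorem P6_eq_mul_Q6_add (X : ℝ) : P6 X = X * Q6 X + 6 := by
  simp only [P6, Q6]
  ring

theorem neg_three_le_Q6 {X : ℝ} (hX : X ∈ Icc 0 1) : -3 ≤ Q6 X := by
  obtain ⟨h0, h1⟩ := hX
  have h5 : 0 ≤ X ^ 5 := pow_nonneg h0 5
  have h6 : X ^ 6 ≤ X ^ 5 := pow_le_pow_of_le_one h0 h1 (by norm_num)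
  have h7 : X ^ 7 ≤ X ^ 5 := pow_le_pow_of_le_one h0 h1 (by norm_num)
  have h8 : X ^ 8 ≤ X ^ 5 := pow_le_pow_of_le_one h0 h1 (by norm_num)
  simp only [Q6]
  linarith

theorem P6_pos {X : ℝ} (hX : X ∈ Icc 0 1) : 0 < P6 X := by
  calc
    0 < X * (-3) + 6 := by linarith [hX.2]
    _ ≤ X * Q6 X + 6 := by gcongr; exacts [hX.1, neg_three_le_Q6 hX]
    _ = P6 X := (P6_eq_mul_Q6_add X).symm

theorem one_lt_of_P6_eq_zero {X : ℝ} (h0 : 0 ≤ X) (hX : P6 X = 0) : 1 < X := by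
  by_contra! h1
  exact (P6_pos ⟨h0, h1⟩).ne' hX

theorem continuous_Q6 : Continuous Q6 := by
  unfold Q6
  fun_prop

theorem exists_mem_Ioo_isLeast_Q6_root :
    ∃ m ∈ Ioo (0 : ℝ) 0.68, IsLeast {X : ℝ | 0 < X ∧ Q6 X = 0} m :=
  exists_mem_Ioo_isLeast_fiber (by norm_num) continuous_Q6.continuousOn
    (by norm_num [Q6]) (by norm_num [Q6])

/-- `P₆ > 0` on `(0, 1]`, so every positive root of `P₆` exceeds `1`; `Q₆` has a
positive root smaller than `0.68`; consequently the smallest positive root of `Q₆`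
is strictly smaller than every positive real root of `P₆`. -/
theorem Q6_smallest_root_lt_P6_roots :
    (∀ X ∈ Set.Ioc (0 : ℝ) 1, 0 < P6 X) ∧
    (∀ X : ℝ, 0 < X → P6 X = 0 → 1 < X) ∧
    (∃ X : ℝ, 0 < X ∧ X < 0.68 ∧ Q6 X = 0) ∧
    (∃ m : ℝ, IsLeast {X : ℝ | 0 < X ∧ Q6 X = 0} m ∧
      ∀ Y : ℝ, 0 < Y → P6 Y = 0 → m < Y) := by
  obtain ⟨m, ⟨m_pos, m_lt⟩, m_least⟩ := exists_mem_Ioo_isLeast_Q6_root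
  have m_lt_one : m < 1 := m_lt.trans (by norm_num)
  exact ⟨fun X hX => P6_pos (Ioc_subset_Icc_self hX),
    fun X hX => one_lt_of_P6_eq_zero hX.le,
    ⟨m, m_pos, m_lt, m_least.1.2⟩,
    m, m_least, fun Y hY hY0 => m_lt_one.trans (one_lt_of_P6_eq_zero hY.le hY0)⟩
end

section
/- Let P_7(X) = 35X⁸ − 0.04X⁹ − 9.2X^{10} − 0.2X^{11} − 4X + 8 and Q_7(X) = 35X⁷ − 0.04X⁸ − 9.2X⁹ − 0.2X^{10} − 4. Then P_7(X) > 0 for all X ∈ (0, 1], so every positive real root of P_7 is greater than 1, while Q_7 has a positive real root smaller than 0.76. Consequently the smallest positive root of Q_7 is strictly smaller than every positive real root of P_7. -/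
/-- `P₇(X) = 35X⁸ − 0.04X⁹ − 9.2X¹⁰ − 0.2X¹¹ − 4X + 8`. -/
noncomputable def P7 : ℝ → ℝ :=
  fun X => 35 * X ^ 8 - 0.04 * X ^ 9 - 9.2 * X ^ 10 - 0.2 * X ^ 11 - 4 * X + 8

/-- `Q₇(X) = 35X⁷ − 0.04X⁸ − 9.2X⁹ − 0.2X¹⁰ − 4`. -/
noncomputable def Q7 : ℝ → ℝ :=
  fun X => 35 * X ^ 7 - 0.04 * X ^ 8 - 9.2 * X ^ 9 - 0.2 * X ^ 10 - 4

/-! The two polynomials are linked by `P_N(X) = X Q_N(X) + 2(N - 3)`. If the `λ₁`-term dominates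
the other three at `X = 1`, then it does so on all of `[0, 1]`, since it has the lowest degree;
hence `Q_N ≥ -(N - 3)` there, and `P_N(X) ≥ (N - 3)(2 - X) > 0`. On the other hand `Q_N(0) < 0`, so
any `b ∈ (0, 1]` with `Q_N(b) > 0` puts the smallest positive root of `Q_N` below all positive
roots of `P_N`. -/

open Set

theorem exists_isLeast_eq_mem_Ioo {α δ : Type*} [ConditionallyCompleteLinearOrder α]
    [TopologicalSpace α] [OrderTopology α] [DenselyOrdered α]
    [LinearOrder δ] [TopologicalSpace δ] [OrderClosedTopology δ]
    {f : α → δ} {a b : α} {c : δ} (hab : a ≤ b) (hf : ContinuousOn f (Icc a b))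
    (ha : f a < c) (hb : c < f b) :
    ∃ m ∈ Ioo a b, IsLeast {x | a < x ∧ f x = c} m := by
  have hcompact : IsCompact (Icc a b ∩ f ⁻¹' {c}) :=
    isCompact_Icc.of_isClosed_subset
      (hf.preimage_isClosed_of_isClosed isClosed_Icc isClosed_singleton) inter_subset_left
  have hnonempty : (Icc a b ∩ f ⁻¹' {c}).Nonempty :=
    intermediate_value_Icc hab hf ⟨ha.le, hb.le⟩
  obtain ⟨m, ⟨⟨ham, hmb⟩, hfm : f m = c⟩, hmin⟩ := hcompact.exists_isLeast hnonempty
  have ham' : a < m := ham.lt_of_ne (by rintro rfl; exact ha.ne hfm)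
  have hmb' : m < b := hmb.lt_of_ne (by rintro rfl; exact hb.ne' hfm)
  refine ⟨m, ⟨ham', hmb'⟩, ⟨ham', hfm⟩, fun y ⟨hay, hfy⟩ => ?_⟩
  rcases le_total y b with hyb | hby
  · exact hmin ⟨⟨hay.le, hyb⟩, hfy⟩
  · exact hmb.trans hby

/-- `P_N`, whose positive roots are the tangents of the outgoing radial null geodesics at the
central singularity; `lᵢ` stands for `λᵢ`. The exponents are natural numbers, so they agree with
those of the paper only for `4 ≤ N`. -/
noncomputable def geodesicPoly (N : ℕ) (l₁ l₂ l₃ l₄ X : ℝ) : ℝ :=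
  (2 * N - 7) * l₁ * X ^ (2 * N - 6) - (N - 3) * l₂ * X ^ (2 * N - 5)
    - (N - 3) * l₃ * X ^ (2 * N - 4) - (N - 3) * l₄ * X ^ (2 * N - 3)
    - (N - 3) * X + 2 * (N - 3)

/-- `Q_N`, whose smallest positive root is the slope of the apparent horizon at the central
singularity; conventions as for `geodesicPoly`. -/
noncomputable def horizonPoly (N : ℕ) (l₁ l₂ l₃ l₄ X : ℝ) : ℝ :=
  (2 * N - 7) * l₁ * X ^ (2 * N - 7) - (N - 3) * l₂ * X ^ (2 * N - 6)
    - (N - 3) * l₃ * X ^ (2 * N - 5) - (N - 3) * l₄ * X ^ (2 * N - 4) - (N - 3)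

section

variable {N : ℕ} {l₁ l₂ l₃ l₄ X : ℝ}

theorem geodesicPoly_eq_mul_horizonPoly_add (hN : 4 ≤ N) :
    geodesicPoly N l₁ l₂ l₃ l₄ X = X * horizonPoly N l₁ l₂ l₃ l₄ X + 2 * (N - 3) := by
  have h₁ : 2 * N - 6 = (2 * N - 7) + 1 := by lia
  have h₂ : 2 * N - 5 = (2 * N - 7) + 2 := by lia
  have h₃ : 2 * N - 4 = (2 * N - 7) + 3 := by lia
  have h₄ : 2 * N - 3 = (2 * N - 7) + 4 := by lia
  rw [geodesicPoly, horizonPoly, h₁, h₂, h₃, h₄]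
  ring

theorem continuous_horizonPoly : Continuous (horizonPoly N l₁ l₂ l₃ l₄) := by
  unfold horizonPoly
  fun_prop

theorem horizonPoly_zero (hN : 4 ≤ N) : horizonPoly N l₁ l₂ l₃ l₄ 0 = -(N - 3) := by
  have h₁ : 2 * N - 7 ≠ 0 := by lia
  have h₂ : 2 * N - 6 ≠ 0 := by lia
  have h₃ : 2 * N - 5 ≠ 0 := by lia
  have h₄ : 2 * N - 4 ≠ 0 := by lia
  simp [horizonPoly, h₁, h₂, h₃, h₄]

theorem neg_le_horizonPoly (hN : 3 ≤ N) (hl₂ : 0 ≤ l₂) (hl₃ : 0 ≤ l₃) (hl₄ : 0 ≤ l₄)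
    (hdom : (N - 3) * (l₂ + l₃ + l₄) ≤ (2 * N - 7) * l₁) (hX : X ∈ Icc 0 1) :
    -(N - 3) ≤ horizonPoly N l₁ l₂ l₃ l₄ X := by
  obtain ⟨hX₀, hX₁⟩ := hX
  have hN₀ : (0 : ℝ) ≤ N - 3 := sub_nonneg.2 (by exact_mod_cast hN)
  have pow_le {k : ℕ} (hk : 2 * N - 7 ≤ k) : X ^ k ≤ X ^ (2 * N - 7) :=
    pow_le_pow_of_le_one hX₀ hX₁ hk
  have hterms : (N - 3) * l₂ * X ^ (2 * N - 6) + (N - 3) * l₃ * X ^ (2 * N - 5)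
      + (N - 3) * l₄ * X ^ (2 * N - 4) ≤ (2 * N - 7) * l₁ * X ^ (2 * N - 7) := by
    calc
      _ ≤ (N - 3) * l₂ * X ^ (2 * N - 7) + (N - 3) * l₃ * X ^ (2 * N - 7)
          + (N - 3) * l₄ * X ^ (2 * N - 7) := by
        gcongr ?_ * ?_ + ?_ * ?_ + ?_ * ?_ <;> exact pow_le (by lia)
      _ = (N - 3) * (l₂ + l₃ + l₄) * X ^ (2 * N - 7) := by ring
      _ ≤ (2 * N - 7) * l₁ * X ^ (2 * N - 7) := by gcongr
  unfold horizonPoly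
  linarith

theorem geodesicPoly_pos (hN : 4 ≤ N) (hl₂ : 0 ≤ l₂) (hl₃ : 0 ≤ l₃) (hl₄ : 0 ≤ l₄)
    (hdom : (N - 3) * (l₂ + l₃ + l₄) ≤ (2 * N - 7) * l₁) (hX : X ∈ Icc 0 1) :
    0 < geodesicPoly N l₁ l₂ l₃ l₄ X := by
  have hN₀ : (0 : ℝ) < N - 3 := sub_pos.2 (by exact_mod_cast hN)
  calc
    0 < (N - 3) * (2 - X) := mul_pos hN₀ (by linarith [hX.2])
    _ = X * -(N - 3) + 2 * (N - 3) := by ring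
    _ ≤ X * horizonPoly N l₁ l₂ l₃ l₄ X + 2 * (N - 3) := by
      gcongr
      · exact hX.1
      · exact neg_le_horizonPoly (by lia) hl₂ hl₃ hl₄ hdom hX
    _ = geodesicPoly N l₁ l₂ l₃ l₄ X := (geodesicPoly_eq_mul_horizonPoly_add hN).symm

theorem exists_isLeast_horizonPoly_root_mem_Ioo (hN : 4 ≤ N) {b : ℝ} (hb : 0 ≤ b)
    (hQb : 0 < horizonPoly N l₁ l₂ l₃ l₄ b) :
    ∃ m ∈ Ioo 0 b, IsLeast {X | 0 < X ∧ horizonPoly N l₁ l₂ l₃ l₄ X = 0} m := by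
  have hQ₀ : horizonPoly N l₁ l₂ l₃ l₄ 0 < 0 := by
    rw [horizonPoly_zero hN, neg_lt_zero, sub_pos]
    exact_mod_cast hN
  exact exists_isLeast_eq_mem_Ioo hb continuous_horizonPoly.continuousOn hQ₀ hQb

end

theorem P7_eq_geodesicPoly : P7 = geodesicPoly 7 5 0.01 2.3 0.05 := by
  ext X
  norm_num [P7, geodesicPoly]

theorem Q7_eq_horizonPoly : Q7 = horizonPoly 7 5 0.01 2.3 0.05 := by
  ext X
  norm_num [Q7, horizonPoly]

/-- `P₇ > 0` on `(0, 1]`, so every positive root of `P₇` exceeds `1`; `Q₇` has a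
positive root smaller than `0.76`; consequently the smallest positive root of `Q₇`
is strictly smaller than every positive real root of `P₇`. -/
theorem Q7_smallest_root_lt_P7_roots :
    (∀ X ∈ Set.Ioc (0 : ℝ) 1, 0 < P7 X) ∧
    (∀ X : ℝ, 0 < X → P7 X = 0 → 1 < X) ∧
    (∃ X : ℝ, 0 < X ∧ X < 0.76 ∧ Q7 X = 0) ∧
    (∃ m : ℝ, IsLeast {X : ℝ | 0 < X ∧ Q7 X = 0} m ∧
      ∀ Y : ℝ, 0 < Y → P7 Y = 0 → m < Y) := by
  have hP : ∀ X ∈ Ioc (0 : ℝ) 1, 0 < P7 X := fun X hX => by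
    rw [P7_eq_geodesicPoly]
    exact geodesicPoly_pos (by norm_num) (by norm_num) (by norm_num) (by norm_num) (by norm_num)
      (Ioc_subset_Icc_self hX)
  have hroot : ∀ X : ℝ, 0 < X → P7 X = 0 → 1 < X := fun X hX hPX =>
    lt_of_not_ge fun hX₁ => (hP X ⟨hX, hX₁⟩).ne' hPX
  obtain ⟨m, ⟨hm₀, hm₁⟩, hm⟩ :
      ∃ m ∈ Ioo (0 : ℝ) 0.76, IsLeast {X : ℝ | 0 < X ∧ Q7 X = 0} m := by
    have hQ : 0 < Q7 0.76 := by norm_num [Q7]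
    rw [Q7_eq_horizonPoly] at hQ ⊢
    exact exists_isLeast_horizonPoly_root_mem_Ioo (by norm_num) (by norm_num) hQ
  refine ⟨hP, hroot, ⟨m, hm₀, hm₁, hm.1.2⟩, m, hm, fun Y hY hPY => ?_⟩
  calc
    m < 0.76 := hm₁
    _ < 1 := by norm_num
    _ < Y := hroot Y hY hPY
end

section
/- For every integer N ≥ 4, the polynomial P_N(X) = 5(2N−7)X^{2N−6} − (N−3)(0.01·X^{2N−5} + 2.3·X^{2N−4} + 0.05·X^{2N−3}) − (N−3)X + 2(N−3) satisfies P_N(X) > 0 for all X ∈ (0, 1]; in particular, every positive real root of P_N is strictly greater than 1. -/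
/-!
For `N ≥ 4` and `λ₁ ≥ 0`, since `2N - 7 ≥ N - 3` and `2N - 6` is even, the polynomial is bounded
below by `(N - 3) (X^(2N-6) (λ₁ - λ₂ X - λ₃ X² - λ₄ X³) + (2 - X))`. On `[-1, 1]` the inner factor
is at least `λ₁ - |λ₂| - |λ₃| - |λ₄| > -1` and it is weighted by `X^(2N-6) ∈ [0, 1]`, so it cannot
outweigh `2 - X ≥ 1`.
-/

/-- The polynomial whose positive roots are the tangents of outgoing radial null geodesics at the
central singularity of the `N`-dimensional collapse. The coefficient `cᵢ` is the `λᵢ` of the mass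
function, and the subtractions in the exponents are meant for `3 ≤ N`, where none is truncated. -/
def tangentPoly (N : ℕ) (c₁ c₂ c₃ c₄ X : ℝ) : ℝ :=
  c₁ * (2 * (N : ℝ) - 7) * X ^ (2 * N - 6) -
    ((N : ℝ) - 3) * (c₂ * X ^ (2 * N - 5) + c₃ * X ^ (2 * N - 4) + c₄ * X ^ (2 * N - 3)) -
    ((N : ℝ) - 3) * X + 2 * ((N : ℝ) - 3)

section

variable {R : Type*} [CommRing R] [LinearOrder R] [IsStrictOrderedRing R]

theorem neg_one_lt_mul_of_mem_Icc {t u : R} (ht : t ∈ Set.Icc 0 1) (hu : -1 < u) :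
    -1 < t * u := by
  obtain rfl | t_pos := ht.1.eq_or_lt
  · simp
  · calc
      -1 ≤ t * -1 := by linarith [ht.2]
      _ < t * u := mul_lt_mul_of_pos_left hu t_pos

theorem pow_mem_Icc_of_even_of_abs_le_one {x : R} {n : ℕ} (hn : Even n) (hx : |x| ≤ 1) :
    x ^ n ∈ Set.Icc 0 1 :=
  ⟨hn.pow_nonneg x, hn.pow_abs x ▸ pow_le_one₀ (abs_nonneg x) hx⟩

theorem mul_pow_le_abs_of_abs_le_one (c : R) {x : R} (hx : |x| ≤ 1) (n : ℕ) :
    c * x ^ n ≤ |c| := by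
  calc
    c * x ^ n ≤ |c * x ^ n| := le_abs_self _
    _ = |c| * |x| ^ n := by rw [abs_mul, abs_pow]
    _ ≤ |c| := mul_le_of_le_one_right (abs_nonneg c) (pow_le_one₀ (abs_nonneg x) hx)

end

section

variable {N : ℕ} {c₁ c₂ c₃ c₄ : ℝ}

theorem tangentPoly_eq_mul_add (hN : 3 ≤ N) (X : ℝ) :
    tangentPoly N c₁ c₂ c₃ c₄ X =
      ((N : ℝ) - 3) *
          (X ^ (2 * N - 6) * (c₁ - (c₂ * X + c₃ * X ^ 2 + c₄ * X ^ 3)) + (2 - X)) +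
        c₁ * ((N : ℝ) - 4) * X ^ (2 * N - 6) := by
  have h₅ : 2 * N - 5 = 2 * N - 6 + 1 := by lia
  have h₄ : 2 * N - 4 = 2 * N - 6 + 2 := by lia
  have h₃ : 2 * N - 3 = 2 * N - 6 + 3 := by lia
  rw [tangentPoly, h₅, h₄, h₃]
  ring

theorem tangentPoly_pos_of_abs_le_one (hN : 4 ≤ N) (hc₁ : 0 ≤ c₁)
    (hc : |c₂| + |c₃| + |c₄| < c₁ + 1) {X : ℝ} (hX : |X| ≤ 1) :
    0 < tangentPoly N c₁ c₂ c₃ c₄ X := by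
  have hN' : (4 : ℝ) ≤ N := mod_cast hN
  have even_exponent : Even (2 * N - 6) := ⟨N - 3, by lia⟩
  have weight_mem : X ^ (2 * N - 6) ∈ Set.Icc 0 1 :=
    pow_mem_Icc_of_even_of_abs_le_one even_exponent hX
  have factor_gt : -1 < c₁ - (c₂ * X + c₃ * X ^ 2 + c₄ * X ^ 3) := by
    linarith [mul_pow_le_abs_of_abs_le_one c₂ hX 1, mul_pow_le_abs_of_abs_le_one c₃ hX 2,
      mul_pow_le_abs_of_abs_le_one c₄ hX 3]
  have main_pos : 0 < X ^ (2 * N - 6) * (c₁ - (c₂ * X + c₃ * X ^ 2 + c₄ * X ^ 3)) + (2 - X) := by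
    linarith [neg_one_lt_mul_of_mem_Icc weight_mem factor_gt, le_of_abs_le hX]
  have remainder_nonneg : 0 ≤ c₁ * ((N : ℝ) - 4) * X ^ (2 * N - 6) :=
    mul_nonneg (mul_nonneg hc₁ (sub_nonneg.2 hN')) weight_mem.1
  rw [tangentPoly_eq_mul_add (by lia)]
  exact add_pos_of_pos_of_nonneg (mul_pos (by linarith) main_pos) remainder_nonneg

theorem PN_pos_on_Ioc_zero_one_general (hN : 4 ≤ N) (hc₁ : 0 ≤ c₁)
    (hc : |c₂| + |c₃| + |c₄| < c₁ + 1) :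
    (∀ X : ℝ, |X| ≤ 1 → 0 < tangentPoly N c₁ c₂ c₃ c₄ X) ∧
      ∀ X : ℝ, tangentPoly N c₁ c₂ c₃ c₄ X = 0 → 1 < |X| :=
  ⟨fun _ hX => tangentPoly_pos_of_abs_le_one hN hc₁ hc hX,
    fun _ root => lt_of_not_ge fun hX => (tangentPoly_pos_of_abs_le_one hN hc₁ hc hX).ne' root⟩

end

/-- For every dimension `N ≥ 4`, the polynomial
`P_N(X) = 5(2N−7)X^(2N−6) − (N−3)(0.01 X^(2N−5) + 2.3 X^(2N−4) + 0.05 X^(2N−3)) − (N−3)X + 2(N−3)`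
is strictly positive on `(0, 1]`; in particular every positive real root of `P_N`
is strictly greater than `1`. -/
theorem PN_pos_on_Ioc_zero_one (N : ℕ) (hN : 4 ≤ N) :
    (∀ X : ℝ, 0 < X → X ≤ 1 →
      0 < 5 * (2 * (N : ℝ) - 7) * X ^ (2 * N - 6) -
        ((N : ℝ) - 3) * (0.01 * X ^ (2 * N - 5) + 2.3 * X ^ (2 * N - 4) +
          0.05 * X ^ (2 * N - 3)) - ((N : ℝ) - 3) * X + 2 * ((N : ℝ) - 3)) ∧
    (∀ X : ℝ, 0 < X →
      5 * (2 * (N : ℝ) - 7) * X ^ (2 * N - 6) -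
        ((N : ℝ) - 3) * (0.01 * X ^ (2 * N - 5) + 2.3 * X ^ (2 * N - 4) +
          0.05 * X ^ (2 * N - 3)) - ((N : ℝ) - 3) * X + 2 * ((N : ℝ) - 3) = 0 →
      1 < X) := by
  obtain ⟨pos, one_lt_abs⟩ := PN_pos_on_Ioc_zero_one_general (c₁ := 5) (c₂ := 0.01) (c₃ := 2.3)
    (c₄ := 0.05) hN (by norm_num) (by norm_num [abs_of_pos])
  exact ⟨fun X h₀ h₁ => pos X ((abs_of_pos h₀).trans_le h₁),
    fun X h₀ root => (one_lt_abs X root).trans_eq (abs_of_pos h₀)⟩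
end
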